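/- Patterson–Sullivan measures {μ_v}_{v∈G} on the Bowditch boundary ∂G, constructed through the action of G on its Cayley graph, have no atoms at bounded parabolic points: μ_v({q}) = 0 for every bounded parabolic point q ∈ ∂G and every v ∈ G. -/

import Mathlib

open Filter Topology Set
open scoped ENNReal NNReal

/-- The word length of `g` with respect to a generating set `S`. -/
noncomputable def wlen {G : Type*} [Group G] (S : Set G) (g : G) : ℕ :=
  sInf {n : ℕ | ∃ w : List G, (∀ x ∈ w, x ∈ S) ∧ w.length = n ∧ w.prod = g}

/-- The word metric on `G` with respect to a generating set `S`. -/
noncomputable def wdist {G : Type*} [Group G] (S : Set G) (g h : G) : ℕ :=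
  wlen S (g⁻¹ * h)

/-- The exponential growth rate of a subset `A` of `G` with respect to the word metric of `S`:
`limsup (1/n) log #(A ∩ B(1,n))`. -/
noncomputable def growthRateOn {G : Type*} [Group G] (S : Set G) (A : Set G) : ℝ :=
  Filter.limsup
    (fun n : ℕ => Real.log (Nat.card {g : G // g ∈ A ∧ wlen S g ≤ n}) / (n : ℝ))
    Filter.atTop

/-- The exponential growth rate of `G` with respect to the word metric of `S`. -/
noncomputable def growthRate {G : Type*} [Group G] (S : Set G) : ℝ :=
  growthRateOn S Set.univ

/-- `S` is a finite symmetric generating set of `G` not containing the identity. -/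
def IsSymmGen {G : Type*} [Group G] (S : Set G) : Prop :=
  S.Finite ∧ Subgroup.closure S = ⊤ ∧ (∀ s ∈ S, s⁻¹ ∈ S) ∧ (1 : G) ∉ S

/-- A group is elementary if it is finite or a finite extension of a cyclic group,
i.e. it has a cyclic subgroup of finite index. -/
def IsElementaryGroup (G : Type*) [Group G] : Prop :=
  ∃ (g : G) (H : Subgroup G), H = Subgroup.zpowers g ∧ H.FiniteIndex

/-- The critical exponent of the Poincaré series `∑_{a ∈ A} exp(-s |a|_S)`. -/
noncomputable def poincareExp {G : Type*} [Group G] (S : Set G) (A : Set G) : ℝ :=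
  sInf {s : ℝ | Summable (fun a : A => Real.exp (-(s * (wlen S (a : G) : ℝ))))}
/-- A metric space is geodesic if every pair of points is joined by an isometrically
parametrized path. -/
def IsGeodesicSpace (X : Type*) [MetricSpace X] : Prop :=
  ∀ x y : X, ∃ f : ℝ → X, f 0 = x ∧ f (dist x y) = y ∧
    ∀ s ∈ Set.Icc (0 : ℝ) (dist x y), ∀ t ∈ Set.Icc (0 : ℝ) (dist x y),
      dist (f s) (f t) = |s - t|

/-- Gromov hyperbolicity, via the four-point condition on Gromov products. -/
def IsGromovHyperbolic (X : Type*) [MetricSpace X] : Prop :=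
  ∃ δ : ℝ, 0 ≤ δ ∧ ∀ x y z w : X,
    min (dist x w + dist y w - dist x y) (dist y w + dist z w - dist y z) - 2 * δ ≤
      dist x w + dist z w - dist x z

/-- A (metrically) proper isometric action: orbits are discrete with finite multiplicity. -/
def ProperAction {G : Type*} [Group G] {X : Type*} [MetricSpace X]
    (ρ : G →* X ≃ᵢ X) : Prop :=
  ∀ x : X, ∀ r : ℝ, {g : G | dist x (ρ g x) ≤ r}.Finite

/-- The (setwise) stabilizer of a subset `U` of `X` under the action `ρ`. -/
def horoStab {G : Type*} [Group G] {X : Type*} [MetricSpace X]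
    (ρ : G →* X ≃ᵢ X) (U : Set X) : Set G :=
  {g : G | (fun x => ρ g x) '' U = U}

/-- A cusp-uniform action: a proper isometric action together with a `G`-invariant system of
open horoballs (each with infinite, parabolic, stabilizer) such that the action on the
complement of the horoballs is cocompact. -/
structure IsCuspUniform {G : Type*} [Group G] {X : Type*} [MetricSpace X]
    (ρ : G →* X ≃ᵢ X) (𝕌 : Set (Set X)) : Prop where
  proper : ProperAction ρ
  horo_open : ∀ U ∈ 𝕌, IsOpen U
  horo_inv : ∀ (g : G), ∀ U ∈ 𝕌, (fun x => ρ g x) '' U ∈ 𝕌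
  horo_par : ∀ U ∈ 𝕌, (horoStab ρ U).Infinite
  cocompact : ∃ K : Set X, IsCompact K ∧ (⋃₀ 𝕌)ᶜ ⊆ ⋃ g : G, (fun x => ρ g x) '' K

/-- A witness that `G` is hyperbolic relative to the collection `Ps` of peripheral subgroups:
a cusp-uniform action on a proper geodesic hyperbolic space whose horoball stabilizers
(the maximal parabolic subgroups) are precisely the conjugates of members of `Ps`. -/
structure RelHypWitness (G : Type*) [Group G] (Ps : Set (Subgroup G)) where
  X : Type
  [ms : MetricSpace X]
  proper : ProperSpace X
  geodesic : IsGeodesicSpace X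
  hyperbolic : IsGromovHyperbolic X
  ρ : G →* X ≃ᵢ X
  horoballs : Set (Set X)
  cusp : IsCuspUniform ρ horoballs
  peri_max : ∀ U ∈ horoballs, ∃ P ∈ Ps, ∃ g : G,
      horoStab ρ U = (fun x => g * x * g⁻¹) '' (P : Set G)
  peri_real : ∀ P ∈ Ps, ∃ U ∈ horoballs, horoStab ρ U = (P : Set G)

/-- `G` is hyperbolic relative to the collection of subgroups `Ps`. -/
def IsRelHypWrt (G : Type*) [Group G] (Ps : Set (Subgroup G)) : Prop :=
  Nonempty (RelHypWitness G Ps)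

/-- `G` is a relatively hyperbolic group (relative to some finite collection of subgroups). -/
def IsRelativelyHyperbolicGroup (G : Type*) [Group G] : Prop :=
  ∃ Ps : Set (Subgroup G), Ps.Finite ∧ IsRelHypWrt G Ps

/-- The growth rate of the quotient group `G ⧸ Γ` with respect to the image of `S`. -/
noncomputable def quotGrowthRate {G : Type*} [Group G] (S : Set G)
    (Γ : Subgroup G) (h : Γ.Normal) : ℝ :=
  @growthRate (G ⧸ Γ) (@QuotientGroup.Quotient.group G _ Γ h)
    ((fun g : G => (QuotientGroup.mk g : G ⧸ Γ)) '' S)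

/-- The quotient `G ⧸ Γ` is a relatively hyperbolic group. -/
def quotIsRelHyp {G : Type*} [Group G] (Γ : Subgroup G) (h : Γ.Normal) : Prop :=
  @IsRelativelyHyperbolicGroup (G ⧸ Γ) (@QuotientGroup.Quotient.group G _ Γ h)

/-- The critical exponent of the orbital counting function of `A ⊆ G` for the action `ρ`
at basepoint `o`. -/
noncomputable def critExpOn {G : Type*} [Group G] {X : Type*} [MetricSpace X]
    (ρ : G →* X ≃ᵢ X) (o : X) (A : Set G) : ℝ :=
  Filter.limsup
    (fun n : ℕ =>
      Real.log (Nat.card {g : G // g ∈ A ∧ dist o (ρ g o) ≤ (n : ℝ)}) / (n : ℝ))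
    Filter.atTop

/-- The critical exponent (growth rate) of the action `ρ` of `G` on `X` at basepoint `o`. -/
noncomputable def critExp {G : Type*} [Group G] {X : Type*} [MetricSpace X]
    (ρ : G →* X ≃ᵢ X) (o : X) : ℝ :=
  critExpOn ρ o Set.univ

/-- The displacement of the coset `c ∈ G ⧸ Γ` in the quotient metric space `X ⧸ Γ`:
`d̄(Γo, Γ(go)) = inf_{γ ∈ Γ} d(o, γ g o)`. -/
noncomputable def quotDisp {G : Type*} [Group G] {X : Type*} [MetricSpace X]
    (ρ : G →* X ≃ᵢ X) (o : X) (Γ : Subgroup G) (c : G ⧸ Γ) : ℝ :=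
  ⨅ g : {g : G // (QuotientGroup.mk g : G ⧸ Γ) = c}, dist o (ρ (g : G) o)

/-- The critical exponent of the induced action of `G ⧸ Γ` on the quotient metric space
`X ⧸ Γ` equipped with the quotient metric. -/
noncomputable def quotCritExp {G : Type*} [Group G] {X : Type*} [MetricSpace X]
    (ρ : G →* X ≃ᵢ X) (o : X) (Γ : Subgroup G) : ℝ :=
  Filter.limsup
    (fun n : ℕ =>
      Real.log (Nat.card {c : G ⧸ Γ // quotDisp ρ o Γ c ≤ (n : ℝ)}) / (n : ℝ))
    Filter.atTop

/-- The parabolic gap property: every maximal parabolic subgroup (horoball stabilizer) has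
critical exponent strictly less than that of `G`. -/
def ParabolicGap {G : Type*} [Group G] {X : Type*} [MetricSpace X]
    (ρ : G →* X ≃ᵢ X) (o : X) (𝕌 : Set (Set X)) : Prop :=
  ∀ U ∈ 𝕌, critExpOn ρ o (horoStab ρ U) < critExp ρ o
/-- `γ` restricted to `{0, …, m}` is a geodesic in the Cayley graph of `(G,S)`. -/
def IsGeodesicSeq {G : Type*} [Group G] (S : Set G) (γ : ℕ → G) (m : ℕ) : Prop :=
  ∀ i ≤ m, ∀ j ≤ m, wdist S (γ i) (γ j) = ((i : ℤ) - (j : ℤ)).natAbs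

/-- `γ` is a geodesic ray in the Cayley graph of `(G,S)`. -/
def IsGeodesicRay {G : Type*} [Group G] (S : Set G) (γ : ℕ → G) : Prop :=
  ∀ i j : ℕ, wdist S (γ i) (γ j) = ((i : ℤ) - (j : ℤ)).natAbs

/-- The collection `ℙ` of peripheral (left) cosets of the peripheral subgroups `Ps`. -/
def periCosets {G : Type*} [Group G] (Ps : Set (Subgroup G)) : Set (Set G) :=
  {A | ∃ g : G, ∃ P ∈ Ps, A = (fun x => g * x) '' (P : Set G)}

/-- The point `γ i` of the geodesic `γ : {0,…,m} → G` is `(ε,R)`-deep in some member of `ℙ`: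
both endpoints of `γ` lie outside `B(γ i, R)` and `γ ∩ B(γ i, R) ⊆ N_ε(A)` for some `A ∈ ℙ`. -/
def deepAt {G : Type*} [Group G] (S : Set G) (ℙ : Set (Set G)) (γ : ℕ → G) (m i : ℕ)
    (ε R : ℝ) : Prop :=
  ∃ A ∈ ℙ, R < (wdist S (γ 0) (γ i) : ℝ) ∧ R < (wdist S (γ m) (γ i) : ℝ) ∧
    ∀ j ≤ m, (wdist S (γ i) (γ j) : ℝ) ≤ R → ∃ a ∈ A, (wdist S (γ j) a : ℝ) ≤ ε

/-- The point `γ i` is an `(ε,R)`-transition point of the geodesic `γ : {0,…,m} → G`. -/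
def transitionAt {G : Type*} [Group G] (S : Set G) (ℙ : Set (Set G)) (γ : ℕ → G) (m i : ℕ)
    (ε R : ℝ) : Prop :=
  ¬ deepAt S ℙ γ m i ε R

/-- The point `γ i` of the geodesic ray `γ` is `(ε,R)`-deep in some member of `ℙ`. -/
def deepAtRay {G : Type*} [Group G] (S : Set G) (ℙ : Set (Set G)) (γ : ℕ → G) (i : ℕ)
    (ε R : ℝ) : Prop :=
  ∃ A ∈ ℙ, R < (wdist S (γ 0) (γ i) : ℝ) ∧
    ∀ j : ℕ, (wdist S (γ i) (γ j) : ℝ) ≤ R → ∃ a ∈ A, (wdist S (γ j) a : ℝ) ≤ ε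

/-- The point `γ i` is an `(ε,R)`-transition point of the geodesic ray `γ`. -/
def transitionAtRay {G : Type*} [Group G] (S : Set G) (ℙ : Set (Set G)) (γ : ℕ → G) (i : ℕ)
    (ε R : ℝ) : Prop :=
  ¬ deepAtRay S ℙ γ i ε R

/-- The cone `Ω_r(g)`: elements `h` such that some word geodesic `[1,h]` meets `B(g,r)`. -/
def cone {G : Type*} [Group G] (S : Set G) (r : ℝ) (g : G) : Set G :=
  {h | ∃ (γ : ℕ → G) (m : ℕ), IsGeodesicSeq S γ m ∧ γ 0 = 1 ∧ γ m = h ∧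
      ∃ i ≤ m, (wdist S (γ i) g : ℝ) ≤ r}

/-- The partial cone `Ω_{r,ε,R}(g)`: elements `h` such that some word geodesic `[1,h]` meets
`B(g,r)` and, moreover, either `d(1,h) ≤ d(1,g) + 2R` or this geodesic has an
`(ε,R)`-transition point at distance at most `2R` from `g`. -/
def partialCone {G : Type*} [Group G] (S : Set G) (ℙ : Set (Set G)) (r ε R : ℝ) (g : G) :
    Set G :=
  {h | ∃ (γ : ℕ → G) (m : ℕ), IsGeodesicSeq S γ m ∧ γ 0 = 1 ∧ γ m = h ∧
      (∃ i ≤ m, (wdist S (γ i) g : ℝ) ≤ r) ∧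
      ((wdist S 1 h : ℝ) ≤ (wdist S 1 g : ℝ) + 2 * R ∨
        ∃ i ≤ m, transitionAt S ℙ γ m i ε R ∧ (wdist S (γ i) g : ℝ) ≤ 2 * R)}

/-- The partial cone `Ω_{ε,R}(g)` of geodesics passing through `g`. -/
def partialConeThrough {G : Type*} [Group G] (S : Set G) (ℙ : Set (Set G)) (ε R : ℝ)
    (g : G) : Set G :=
  {h | ∃ (γ : ℕ → G) (m : ℕ), IsGeodesicSeq S γ m ∧ γ 0 = 1 ∧ γ m = h ∧
      (∃ i ≤ m, γ i = g) ∧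
      ((wdist S 1 h : ℝ) ≤ (wdist S 1 g : ℝ) + 2 * R ∨
        ∃ i ≤ m, transitionAt S ℙ γ m i ε R ∧ (wdist S (γ i) g : ℝ) ≤ 2 * R)}

/-- The annulus `A(g,n,Δ) = {h : n − Δ ≤ d(1,h) − d(1,g) < n + Δ}`. -/
def annulus {G : Type*} [Group G] (S : Set G) (g : G) (n Δ : ℝ) : Set G :=
  {h | n - Δ ≤ (wdist S 1 h : ℝ) - (wdist S 1 g : ℝ) ∧
       (wdist S 1 h : ℝ) - (wdist S 1 g : ℝ) < n + Δ}
/-- The boundary of `G` in the compactification `Z ⊇ ι(G)`. -/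
def bdryZ {G : Type*} {Z : Type*} (ι : G → Z) : Set Z := (Set.range ι)ᶜ

/-- Geodesic rays in `𝒢(G,S)` issuing from `v` and converging to `ξ ∈ Z`. -/
def raysTo {G : Type*} [Group G] {Z : Type*} [TopologicalSpace Z] (S : Set G) (ι : G → Z)
    (ξ : Z) (v : G) : Set (ℕ → G) :=
  {γ | γ 0 = v ∧ IsGeodesicRay S γ ∧
    Filter.Tendsto (fun n => ι (γ n)) Filter.atTop (nhds ξ)}

/-- Geodesic rays in `𝒢(G,S)` converging to `ξ ∈ Z` (with arbitrary initial point). -/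
def raysEnding {G : Type*} [Group G] {Z : Type*} [TopologicalSpace Z] (S : Set G)
    (ι : G → Z) (ξ : Z) : Set (ℕ → G) :=
  {γ | IsGeodesicRay S γ ∧ Filter.Tendsto (fun n => ι (γ n)) Filter.atTop (nhds ξ)}

/-- The set of conical limit points of the action of `G` on the boundary `Z ∖ ι(G)`. -/
def conicalPts (G : Type*) [Group G] {Z : Type*} [TopologicalSpace Z] [MulAction G Z]
    (ι : G → Z) : Set Z :=
  {ξ | ξ ∈ bdryZ ι ∧ ∃ (gs : ℕ → G) (a b : Z), a ∈ bdryZ ι ∧ b ∈ bdryZ ι ∧ a ≠ b ∧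
      ∀ ζ ∈ bdryZ ι, ζ ≠ ξ →
        Filter.Tendsto (fun n => gs n • ξ) Filter.atTop (nhds a) ∧
        Filter.Tendsto (fun n => gs n • ζ) Filter.atTop (nhds b)}

/-- `q` is a bounded parabolic point: its stabilizer is infinite and acts properly and
cocompactly on `∂G ∖ {q}`. -/
def IsBddParabolicPt (G : Type*) [Group G] {Z : Type*} [TopologicalSpace Z] [MulAction G Z]
    (ι : G → Z) (q : Z) : Prop :=
  q ∈ bdryZ ι ∧ {g : G | g • q = q}.Infinite ∧
    (∃ K : Set Z, IsCompact K ∧ K ⊆ bdryZ ι \ {q} ∧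
      ∀ ξ ∈ bdryZ ι \ {q}, ∃ g : G, g • q = q ∧ g • ξ ∈ K) ∧
    ∀ K : Set Z, IsCompact K → K ⊆ bdryZ ι \ {q} →
      {g : G | g • q = q ∧ ((fun z : Z => g • z) '' K ∩ K).Nonempty}.Finite

/-- The shadow `Π_r(g)`: boundary points `ξ` such that some geodesic ray `[1,ξ]` meets
the ball `B(g,r)`. -/
def shadow {G : Type*} [Group G] {Z : Type*} [TopologicalSpace Z] (S : Set G) (ι : G → Z)
    (r : ℝ) (g : G) : Set Z :=
  {ξ | ξ ∈ bdryZ ι ∧ ∃ γ ∈ raysTo S ι ξ 1, ∃ n : ℕ, (wdist S (γ n) g : ℝ) ≤ r}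

/-- The strong shadow `ϖ_r(g)`: boundary points `ξ` such that every geodesic ray `[1,ξ]`
meets the ball `B(g,r)`. -/
def strongShadow {G : Type*} [Group G] {Z : Type*} [TopologicalSpace Z] (S : Set G)
    (ι : G → Z) (r : ℝ) (g : G) : Set Z :=
  {ξ | ξ ∈ bdryZ ι ∧ (raysTo S ι ξ 1).Nonempty ∧
      ∀ γ ∈ raysTo S ι ξ 1, ∃ n : ℕ, (wdist S (γ n) g : ℝ) ≤ r}

/-- The partial shadow `Π_{r,ε,R}(g)`: boundary points `ξ` such that some geodesic ray
`[1,ξ]` meets `B(g,r)` and contains an `(ε,R)`-transition point in `B(g,2R)`. -/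
def partialShadow {G : Type*} [Group G] {Z : Type*} [TopologicalSpace Z] (S : Set G)
    (ι : G → Z) (ℙ : Set (Set G)) (r ε R : ℝ) (g : G) : Set Z :=
  {ξ | ξ ∈ bdryZ ι ∧ ∃ γ ∈ raysTo S ι ξ 1,
      (∃ n : ℕ, (wdist S (γ n) g : ℝ) ≤ r) ∧
      ∃ i : ℕ, transitionAtRay S ℙ γ i ε R ∧ (wdist S (γ i) g : ℝ) ≤ 2 * R}

/-- The limit set of `A ⊆ G`: accumulation points of `ι(A)` in the boundary. -/
def limitSet {G : Type*} {Z : Type*} [TopologicalSpace Z] (ι : G → Z) (A : Set G) : Set Z :=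
  bdryZ ι ∩ closure (ι '' A)

/-- The Busemann (horofunction) limit `b_γ(x) = lim_t (d(x, γ(t)) − t)` along a ray `γ`. -/
noncomputable def busemann {G : Type*} [Group G] (S : Set G) (γ : ℕ → G) (x : G) : ℝ :=
  Filter.limsup (fun t : ℕ => (wdist S x (γ t) : ℝ) - (t : ℝ)) Filter.atTop

/-- The horofunction cocycle `B_ξ(x,y) = sup_{γ : γ₊ = ξ} (b_γ(x) − b_γ(y))` at `ξ`. -/
noncomputable def horoCocycle {G : Type*} [Group G] {Z : Type*} [TopologicalSpace Z]
    (S : Set G) (ι : G → Z) (ξ : Z) (x y : G) : ℝ :=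
  sSup ((fun γ => busemann S γ x - busemann S γ y) '' raysEnding S ι ξ)

/-- `Z` is a compactification of the Cayley graph of `(G,S)` by a boundary on which `G` acts
geometrically finitely: `ι` is an equivariant dense embedding of `G`, geodesic rays converge
to boundary points, every boundary point is the endpoint of geodesic rays from every vertex,
and every boundary point is either conical or bounded parabolic. -/
def IsGeomFinBoundary (G : Type*) [Group G] {Z : Type*} [TopologicalSpace Z] [MulAction G Z]
    (S : Set G) (ι : G → Z) : Prop :=
  Function.Injective ι ∧
  (∀ g h : G, g • ι h = ι (g * h)) ∧
  (∀ g : G, Continuous (fun z : Z => g • z)) ∧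
  Dense (Set.range ι) ∧
  (bdryZ ι).Nontrivial ∧
  (∀ ξ ∈ bdryZ ι, ∀ v : G, (raysTo S ι ξ v).Nonempty) ∧
  (∀ γ : ℕ → G, IsGeodesicRay S γ →
      ∃ ξ ∈ bdryZ ι, Filter.Tendsto (fun n => ι (γ n)) Filter.atTop (nhds ξ)) ∧
  (∀ ξ ∈ bdryZ ι, ξ ∈ conicalPts G ι ∨ IsBddParabolicPt G ι ξ)
open MeasureTheory

/-- A `σ`-dimensional visual density: a `G`-equivariant family of finite positive Radon
measures on the boundary `Z ∖ ι(G)`, mutually absolutely continuous with Radon–Nikodym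
derivatives pinched between `exp(∓σ d(v,w))` (up to a uniform multiplicative constant). -/
def IsVisualDensity {G : Type*} [Group G] {Z : Type*} [MetricSpace Z] [MeasurableSpace Z]
    [MulAction G Z] (S : Set G) (ι : G → Z) (σ : ℝ) (μ : G → Measure Z) : Prop :=
  (∀ v : G, IsFiniteMeasure (μ v)) ∧ (∀ v : G, μ v ≠ 0) ∧
  (∀ v : G, μ v (Set.range ι) = 0) ∧
  (∀ g v : G, μ (g * v) = Measure.map (fun z : Z => g • z) (μ v)) ∧
  ∃ C : ℝ, 0 < C ∧ ∀ v w : G, ∀ A : Set Z,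
    ENNReal.ofReal (C⁻¹ * Real.exp (-(σ * (wdist S v w : ℝ)))) * μ w A ≤ μ v A ∧
    μ v A ≤ ENNReal.ofReal (C * Real.exp (σ * (wdist S v w : ℝ))) * μ w A

/-- A `σ`-dimensional quasi-conformal density: a visual density whose Radon–Nikodym
derivatives satisfy `dμ_v/dμ_w(ξ) ≍ exp(−σ B_ξ(v,w))` at almost every conical point `ξ`. -/
def IsQuasiConformalDensity {G : Type*} [Group G] {Z : Type*} [MetricSpace Z]
    [MeasurableSpace Z] [MulAction G Z] (S : Set G) (ι : G → Z) (σ : ℝ)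
    (μ : G → Measure Z) : Prop :=
  IsVisualDensity S ι σ μ ∧
  ∃ C : ℝ, 0 < C ∧ ∀ v w : G,
    ∀ᵐ ξ ∂(μ w), ξ ∈ conicalPts G ι →
      ENNReal.ofReal (C⁻¹ * Real.exp (-(σ * horoCocycle S ι ξ v w))) ≤
          (μ v).rnDeriv (μ w) ξ ∧
        (μ v).rnDeriv (μ w) ξ ≤
          ENNReal.ofReal (C * Real.exp (-(σ * horoCocycle S ι ξ v w)))

/-- The weight `H(d(v,g)) e^{−s d(v,g)}` of the orbit point `g` in Patterson's construction. -/
noncomputable def psWeight {G : Type*} [Group G] (S : Set G) (H : ℝ → ℝ) (s : ℝ)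
    (v g : G) : ℝ≥0∞ :=
  ENNReal.ofReal (H (wdist S v g : ℝ) * Real.exp (-(s * (wdist S v g : ℝ))))

/-- The normalized approximating measure `μ_v^s` in Patterson's construction. -/
noncomputable def psApprox {G : Type*} [Group G] {Z : Type*} [MeasurableSpace Z] (S : Set G)
    (ι : G → Z) (H : ℝ → ℝ) (s : ℝ) (v : G) : Measure Z :=
  (∑' g : G, psWeight S H s 1 g)⁻¹ •
    Measure.sum (fun g : G => psWeight S H s v g • Measure.dirac (ι g))

/-- Patterson's slowly growing adjustment function `H`: monotone, positive, subexponentially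
growing, making the adjusted Poincaré series diverge exactly up to the growth rate `δ_G`. -/
def IsPattersonFunction {G : Type*} [Group G] (S : Set G) (H : ℝ → ℝ) : Prop :=
  Monotone H ∧ (∀ t : ℝ, 0 < H t) ∧
  (∀ ε > (0 : ℝ), ∃ t₀ : ℝ, ∀ t > t₀, ∀ a > (0 : ℝ),
      H (a + t) ≤ Real.exp (a * ε) * H t) ∧
  (∀ s : ℝ, s ≤ growthRate S →
      ¬ Summable (fun g : G => H (wdist S 1 g : ℝ) * Real.exp (-(s * (wdist S 1 g : ℝ))))) ∧
  (∀ s : ℝ, growthRate S < s →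
      Summable (fun g : G => H (wdist S 1 g : ℝ) * Real.exp (-(s * (wdist S 1 g : ℝ)))))

/-- `μ` is a family of Patterson–Sullivan measures for `(G,S)` on the compactification `Z`:
a weak-* limit, along a sequence `s_i ↓ δ_G`, of the normalized measures
`μ_v^{s}` built from a Patterson adjustment function `H`. -/
def IsPSMeasures {G : Type*} [Group G] {Z : Type*} [MetricSpace Z] [MeasurableSpace Z]
    (S : Set G) (ι : G → Z) (μ : G → Measure Z) : Prop :=
  (∀ v : G, IsFiniteMeasure (μ v)) ∧
  ∃ (H : ℝ → ℝ) (sq : ℕ → ℝ), IsPattersonFunction S H ∧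
    (∀ n : ℕ, growthRate S < sq n) ∧
    Filter.Tendsto sq Filter.atTop (nhds (growthRate S)) ∧
    ∀ (v : G) (f : C(Z, ℝ)),
      Filter.Tendsto (fun n => ∫ z, f z ∂(psApprox S ι H (sq n) v)) Filter.atTop
        (nhds (∫ z, f z ∂(μ v)))

/-!
Let `q` be a bounded parabolic point, `K` a compact fundamental domain for its stabilizer on the
complement of `q` in the boundary, and suppose that `q` is an atom. Then the mass
`∑_g μ_g(K) μ_g({q})` is computed in two ways. Over each sphere `|g| = n`, the bounds
`μ_g(K) ≥ e^{-δn} μ_1(K)` and `∑_{|g| = n} μ_g({q}) ≥ e^{δn} μ_1({q})` show that it is at least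
`μ_1(K) μ_1({q})`, which is positive because some translate of `q` lies in `K`, so the total is
infinite. On the other hand equivariance turns it into `∑_g (μ_1 × μ_1)(g⁻¹K × g⁻¹{q})`, and
properness of the stabilizer of `q` bounds the multiplicity of the sets `g⁻¹K × g⁻¹{q}`, so the
total is finite.
-/

section WordLength

variable {G : Type*} [Group G] {S : Set G}

lemma wlen_prod_le {w : List G} (hw : ∀ x ∈ w, x ∈ S) : wlen S w.prod ≤ w.length :=
  Nat.sInf_le ⟨w, hw, rfl, rfl⟩

@[simp]
lemma wdist_one_left (g : G) : wdist S 1 g = wlen S g := by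
  simp only [wdist, inv_one, one_mul]

lemma wdist_mul_left (k g h : G) : wdist S (k * g) (k * h) = wdist S g h := by
  simp only [wdist, mul_inv_rev, mul_assoc, inv_mul_cancel_left]

namespace IsSymmGen

lemma exists_prod_eq (hS : IsSymmGen S) (g : G) :
    ∃ w : List G, (∀ x ∈ w, x ∈ S) ∧ w.prod = g := by
  have hinv : S ∪ S⁻¹ = S :=
    union_eq_left.2 fun x hx => by simpa only [inv_inv] using hS.2.2.1 _ (mem_inv.1 hx)
  have hg : g ∈ (Subgroup.closure S).toSubmonoid := by
    simp only [hS.2.1, Subgroup.mem_toSubmonoid, Subgroup.mem_top]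
  rw [Subgroup.closure_toSubmonoid, hinv] at hg
  exact Submonoid.exists_list_of_mem_closure hg

lemma exists_prod_eq_and_length_eq (hS : IsSymmGen S) (g : G) :
    ∃ w : List G, (∀ x ∈ w, x ∈ S) ∧ w.length = wlen S g ∧ w.prod = g := by
  obtain ⟨w, hw, hg⟩ := hS.exists_prod_eq g
  exact Nat.sInf_mem (s := {n | ∃ w : List G, (∀ x ∈ w, x ∈ S) ∧ w.length = n ∧ w.prod = g})
    ⟨w.length, w, hw, rfl, hg⟩

lemma wlen_mul_le (hS : IsSymmGen S) (g h : G) : wlen S (g * h) ≤ wlen S g + wlen S h := by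
  obtain ⟨u, hu, hul, rfl⟩ := hS.exists_prod_eq_and_length_eq g
  obtain ⟨v, hv, hvl, rfl⟩ := hS.exists_prod_eq_and_length_eq h
  rw [← hul, ← hvl, ← List.prod_append, ← List.length_append]
  exact wlen_prod_le fun x hx => (List.mem_append.1 hx).elim (hu x) (hv x)

lemma wlen_inv_le (hS : IsSymmGen S) (g : G) : wlen S g⁻¹ ≤ wlen S g := by
  obtain ⟨u, hu, hul, rfl⟩ := hS.exists_prod_eq_and_length_eq g
  rw [← hul, List.prod_inv_reverse]
  refine (wlen_prod_le fun x hx => ?_).trans (by simp)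
  obtain ⟨y, hy, rfl⟩ := List.mem_map.1 (List.mem_reverse.1 hx)
  exact hS.2.2.1 y (hu y hy)

lemma wlen_inv (hS : IsSymmGen S) (g : G) : wlen S g⁻¹ = wlen S g :=
  le_antisymm (hS.wlen_inv_le g) (by simpa only [inv_inv] using hS.wlen_inv_le g⁻¹)

lemma wdist_one_right (hS : IsSymmGen S) (g : G) : wdist S g 1 = wlen S g := by
  rw [wdist, mul_one, hS.wlen_inv]

lemma wdist_triangle (hS : IsSymmGen S) (x y z : G) :
    wdist S x z ≤ wdist S x y + wdist S y z := by
  simpa only [wdist, mul_assoc, mul_inv_cancel_left] using hS.wlen_mul_le (x⁻¹ * y) (y⁻¹ * z)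

lemma finite_setOf_wlen_le (hS : IsSymmGen S) (n : ℕ) : {g : G | wlen S g ≤ n}.Finite := by
  have := hS.1.to_subtype
  refine ((List.finite_length_le S n).image fun w => (w.map Subtype.val).prod).subset fun g hg => ?_
  obtain ⟨w, hw, hl, rfl⟩ := hS.exists_prod_eq_and_length_eq g
  exact ⟨w.pmap Subtype.mk hw, by simpa [hl] using hg, by simp [List.map_pmap]⟩

lemma finite_sphere (hS : IsSymmGen S) (n : ℕ) : (wlen S ⁻¹' {n}).Finite :=
  (hS.finite_setOf_wlen_le n).subset fun _ hg => le_of_eq hg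

lemma tendsto_wdist_cofinite_atTop (hS : IsSymmGen S) (y : G) :
    Tendsto (fun g => (wdist S y g : ℝ)) cofinite atTop := by
  refine tendsto_natCast_atTop_atTop.comp (tendsto_atTop.2 fun n => ?_)
  rw [eventually_cofinite]
  exact ((hS.finite_setOf_wlen_le n).preimage (mul_right_injective y⁻¹).injOn).subset
    fun g hg => (not_le.1 hg).le

lemma exists_wlen_eq_and_add_wdist_eq (hS : IsSymmGen S) {g : G} {n : ℕ} (hn : n ≤ wlen S g) :
    ∃ y, wlen S y = n ∧ n + wdist S y g = wlen S g := by
  obtain ⟨w, hw, hl, rfl⟩ := hS.exists_prod_eq_and_length_eq g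
  have htake : wlen S (w.take n).prod ≤ n :=
    (wlen_prod_le fun x hx => hw x (List.mem_of_mem_take hx)).trans (List.length_take_le n w)
  have hdrop : wdist S (w.take n).prod w.prod ≤ w.length - n := by
    rw [wdist, ← List.prod_take_mul_prod_drop w n, inv_mul_cancel_left, ← List.length_drop]
    exact wlen_prod_le fun x hx => hw x (List.mem_of_mem_drop hx)
  have htri := hS.wdist_triangle 1 (w.take n).prod w.prod
  simp only [wdist_one_left] at htri
  exact ⟨(w.take n).prod, by omega, by omega⟩

end IsSymmGen

lemma growthRate_nonneg (S : Set G) : 0 ≤ growthRate S := by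
  rw [growthRate, growthRateOn, limsup_eq]
  refine Real.sInf_nonneg fun a ha => ?_
  obtain ⟨n, hn⟩ := ha.exists
  exact (div_nonneg (Real.log_natCast_nonneg _) n.cast_nonneg).trans hn

end WordLength

section Measure

lemma mul_measure_le_of_forall_mul_lintegral_le {Z : Type*} [TopologicalSpace Z] [NormalSpace Z]
    [MeasurableSpace Z] [OpensMeasurableSpace Z] {ν ρ : Measure Z} [ρ.OuterRegular] {c : ℝ≥0∞}
    {U : Set Z} (hU : IsOpen U)
    (h : ∀ f : BoundedContinuousFunction Z ℝ≥0, (∀ z ∉ U, f z = 0) →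
      c * ∫⁻ z, f z ∂ν ≤ ∫⁻ z, f z ∂ρ)
    {F : Set Z} (hF : IsClosed F) (hFU : F ⊆ U) : c * ν F ≤ ρ F := by
  refine ENNReal.le_of_forall_pos_le_add fun ε hε _ => ?_
  obtain ⟨W, hFW, hW, hWε⟩ := F.exists_isOpen_le_add ρ (ENNReal.coe_pos.2 hε).ne'
  obtain ⟨f, hf0, hf1, hf01⟩ := exists_bounded_zero_one_of_closed (hU.inter hW).isClosed_compl hF
    (disjoint_compl_left_iff_subset.2 (subset_inter hFU hFW))
  have hle : F.indicator 1 ≤ fun z => (f.nnrealPart z : ℝ≥0∞) :=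
    indicator_le fun z hz => by simp [BoundedContinuousFunction.nnrealPart_coeFn_eq, hf1 hz]
  have hge : (fun z => (f.nnrealPart z : ℝ≥0∞)) ≤ W.indicator 1 := fun z => by
    by_cases hz : z ∈ W
    · simpa [BoundedContinuousFunction.nnrealPart_coeFn_eq, hz] using (hf01 z).2
    · simp [BoundedContinuousFunction.nnrealPart_coeFn_eq, hf0 fun hzUW => hz hzUW.2]
  calc c * ν F = c * ∫⁻ z, F.indicator 1 z ∂ν := by rw [lintegral_indicator_one hF.measurableSet]
    _ ≤ c * ∫⁻ z, f.nnrealPart z ∂ν := mul_le_mul_right (lintegral_mono hle) c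
    _ ≤ ∫⁻ z, f.nnrealPart z ∂ρ := h _ fun z hz => by
        simp [BoundedContinuousFunction.nnrealPart_coeFn_eq, hf0 fun hzUW => hz hzUW.1]
    _ ≤ ∫⁻ z, W.indicator 1 z ∂ρ := lintegral_mono hge
    _ = ρ W := lintegral_indicator_one hW.measurableSet
    _ ≤ ρ F + ε := hWε

lemma tsum_measure_le_of_forall_encard_le {ι α : Type*} [MeasurableSpace α] (ν : Measure α)
    {A : ι → Set α} (hA : ∀ i, MeasurableSet (A i)) {N : ℕ∞}
    (hN : ∀ x, {i | x ∈ A i}.encard ≤ N) : ∑' i, ν (A i) ≤ N * ν univ := by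
  classical
  rw [ENNReal.tsum_eq_iSup_sum]
  refine iSup_le fun s => ?_
  have hsum : ∀ x, ∑ i ∈ s, (A i).indicator (1 : α → ℝ≥0∞) x ≤ N := fun x => by
    have hcard : ((s.filter (x ∈ A ·)).card : ℕ∞) ≤ N := by
      rw [← Set.encard_coe_eq_coe_finsetCard]
      exact (encard_le_encard fun i hi => (Finset.mem_filter.1 hi).2).trans (hN x)
    simpa [Set.indicator_apply] using ENat.toENNReal_le.2 hcard
  calc ∑ i ∈ s, ν (A i) = ∑ i ∈ s, ∫⁻ x, (A i).indicator 1 x ∂ν := by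
        simp only [lintegral_indicator_one (hA _)]
    _ = ∫⁻ x, ∑ i ∈ s, (A i).indicator 1 x ∂ν :=
        (lintegral_finsetSum s fun i _ => measurable_one.indicator (hA i)).symm
    _ ≤ ∫⁻ _, N ∂ν := lintegral_mono hsum
    _ = N * ν univ := lintegral_const _

end Measure

section Action

variable {G : Type*} [Group G] {Z : Type*} [MulAction G Z]

lemma encard_setOf_smul_mem_and_smul_eq_le (K : Set Z) (q x y : Z) :
    {g : G | g • x ∈ K ∧ g • y = q}.encard ≤
      {g : G | g • q = q ∧ ((fun z : Z => g • z) '' K ∩ K).Nonempty}.encard := by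
  rcases eq_empty_or_nonempty {g : G | g • x ∈ K ∧ g • y = q} with hempty | ⟨k, hkx, hky⟩
  · simp only [hempty, encard_empty, zero_le]
  · rw [← (mul_left_injective k⁻¹).encard_image]
    refine encard_le_encard ?_
    rintro _ ⟨g, ⟨hgx, hgy⟩, rfl⟩
    have hsmul : ∀ z : Z, (g * k⁻¹) • k • z = g • z := fun z => by
      rw [smul_smul, inv_mul_cancel_right]
    have hstab : (g * k⁻¹) • q = q :=
      (congrArg ((g * k⁻¹) • ·) hky).symm.trans ((hsmul y).trans hgy)
    exact ⟨hstab, g • x, ⟨k • x, hkx, hsmul x⟩, hgx⟩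

lemma tsum_measure_preimage_smul_mul_le [MeasurableSpace Z] [MeasurableConstSMul G Z]
    [MeasurableSingletonClass Z] (ν : Measure Z) [SFinite ν] {K : Set Z} (hK : MeasurableSet K)
    (q : Z) :
    ∑' g : G, ν ((g • ·) ⁻¹' K) * ν ((g • ·) ⁻¹' {q}) ≤
      {g : G | g • q = q ∧ ((fun z : Z => g • z) '' K ∩ K).Nonempty}.encard *
        (ν univ * ν univ) := by
  have hA : ∀ g : G, MeasurableSet (((g • ·) ⁻¹' K) ×ˢ ((g • ·) ⁻¹' {q}) : Set (Z × Z)) := fun g =>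
    (measurable_const_smul g hK).prod (measurable_const_smul g (measurableSet_singleton q))
  simpa only [Measure.prod_prod, univ_prod_univ.symm] using
    tsum_measure_le_of_forall_encard_le (ν.prod ν) hA
      fun x => encard_setOf_smul_mem_and_smul_eq_le K q x.1 x.2

end Action

section Parabolic

variable {G : Type*} [Group G] {Z : Type*} [MulAction G Z] {ι : G → Z}

lemma smul_mem_bdryZ (hequiv : ∀ g h : G, g • ι h = ι (g * h)) (g : G) {z : Z}
    (hz : z ∈ bdryZ ι) : g • z ∈ bdryZ ι := by
  rintro ⟨h, hh⟩
  exact hz ⟨g⁻¹ * h, by rw [← hequiv, hh, inv_smul_smul]⟩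

namespace IsBddParabolicPt

variable [TopologicalSpace Z] {q ξ : Z}

lemma finite_setOf_smul_eq (hq : IsBddParabolicPt G ι q) (hξ : ξ ∈ bdryZ ι) (hξq : ξ ≠ q) :
    {g : G | g • q = q ∧ g • ξ = ξ}.Finite :=
  (hq.2.2.2 {ξ} isCompact_singleton (singleton_subset_iff.2 ⟨hξ, hξq⟩)).subset
    fun _ hg => ⟨hg.1, ξ, ⟨ξ, rfl, hg.2⟩, rfl⟩

lemma finite_range_of_tendsto (hq : IsBddParabolicPt G ι q)
    (hequiv : ∀ g h : G, g • ι h = ι (g * h)) (hξ : ξ ∈ bdryZ ι) (hξq : ξ ≠ q) {gs : ℕ → G}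
    (hgs : ∀ n, gs n • q = q) {a : Z} (ha : a ∈ bdryZ ι) (haq : a ≠ q)
    (hlim : Tendsto (fun n => gs n • ξ) atTop (𝓝 a)) : (range gs).Finite := by
  set K : Set Z := insert ξ (insert a (range fun n => gs n • ξ))
  have hK : IsCompact K := hlim.isCompact_insert_range.insert ξ
  have hKsub : K ⊆ bdryZ ι \ {q} := by
    rintro z (rfl | rfl | ⟨n, rfl⟩)
    · exact ⟨hξ, hξq⟩
    · exact ⟨ha, haq⟩
    · exact ⟨smul_mem_bdryZ hequiv _ hξ,
        fun h => hξq (smul_left_cancel (gs n) (h.trans (hgs n).symm))⟩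
  refine (hq.2.2.2 K hK hKsub).subset ?_
  rintro _ ⟨n, rfl⟩
  exact ⟨hgs n, gs n • ξ, ⟨ξ, Or.inl rfl, rfl⟩, Or.inr (Or.inr ⟨n, rfl⟩)⟩

-- If all of `G` fixes `q`, it acts properly on the rest of the boundary, where there is then room
-- neither for a conical point nor for a second parabolic one.
lemma exists_smul_ne [T2Space Z] (hq : IsBddParabolicPt G ι q)
    (hequiv : ∀ g h : G, g • ι h = ι (g * h)) (hnt : (bdryZ ι).Nontrivial)
    (hgf : ∀ ξ ∈ bdryZ ι, ξ ∈ conicalPts G ι ∨ IsBddParabolicPt G ι ξ) : ∃ g : G, g • q ≠ q := by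
  by_contra! hfix
  have hne : ∀ (g : G) {z : Z}, z ≠ q → g • z ≠ q := fun g z hz h =>
    hz (smul_left_cancel g (h.trans (hfix g).symm))
  obtain ⟨ξ, hξ, hξq⟩ := hnt.exists_ne q
  have hstab : {g : G | g • ξ = ξ}.Finite := by
    simpa only [hfix, true_and] using hq.finite_setOf_smul_eq hξ hξq
  rcases hgf ξ hξ with ⟨-, gs, a, b, ha, -, hab, hconv⟩ | hpar
  · obtain ⟨hξa, hqb⟩ := hconv q hq.1 hξq.symm
    obtain rfl : q = b := tendsto_nhds_unique (by simp only [hfix, tendsto_const_nhds]) hqb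
    have hfin := hq.finite_range_of_tendsto hequiv hξ hξq (fun n => hfix (gs n)) ha hab hξa
    obtain ⟨g, -, hg⟩ : ∃ g ∈ range gs, ∃ᶠ n in atTop, gs n = g :=
      hfin.frequently_exists.1 (Frequently.of_forall fun n => ⟨gs n, ⟨n, rfl⟩, rfl⟩)
    obtain ⟨h, -, hh⟩ := hq.2.1.exists_notMem_finite hstab
    have hgq : q ∈ ({g • h • ξ} : Set Z) := isClosed_singleton.mem_of_frequently_of_tendsto
      (hg.mono fun n hn => by simp only [hn, mem_singleton_iff])
      (hconv (h • ξ) (smul_mem_bdryZ hequiv h hξ) hh).2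
    exact hne g (hne h hξq) hgq.symm
  · exact hpar.2.1 hstab

end IsBddParabolicPt

end Parabolic

section Patterson

variable {G : Type*} [Group G] {S : Set G} {H : ℝ → ℝ}

lemma psWeight_mul_left (H : ℝ → ℝ) (s : ℝ) (k v g : G) :
    psWeight S H s (k * v) (k * g) = psWeight S H s v g := by
  simp only [psWeight, wdist_mul_left]

lemma tsum_psWeight (H : ℝ → ℝ) (s : ℝ) (v : G) :
    ∑' g, psWeight S H s v g = ∑' g, psWeight S H s 1 g := by
  rw [← (Equiv.mulLeft v).tsum_eq]
  simpa only [Equiv.coe_mulLeft, mul_one] using tsum_congr fun g => psWeight_mul_left H s v 1 g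

lemma psWeight_le_psWeight {c : ℝ≥0} {s b : ℝ} (hs : 0 ≤ s) {w y g : G}
    (hpos : 0 ≤ H (wdist S y g)) (hH : c * H (wdist S w g) ≤ H (wdist S y g))
    (hb : (wdist S y g : ℝ) ≤ wdist S w g + b) :
    c * ENNReal.ofReal (Real.exp (-(s * b))) * psWeight S H s w g ≤ psWeight S H s y g := by
  have hexp : Real.exp (-(s * b)) * Real.exp (-(s * wdist S w g)) ≤
      Real.exp (-(s * wdist S y g)) := by
    rw [← Real.exp_add, Real.exp_le_exp]
    linarith [mul_le_mul_of_nonneg_left hb hs]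
  rw [psWeight, psWeight, ← ENNReal.ofReal_coe_nnreal, ← ENNReal.ofReal_mul (NNReal.coe_nonneg c),
    ← ENNReal.ofReal_mul (by positivity), mul_mul_mul_comm]
  exact ENNReal.ofReal_le_ofReal (mul_le_mul hH hexp (by positivity) hpos)

lemma IsPattersonFunction.eventually_mul_apply_add_le (hH : IsPattersonFunction S H) {c : ℝ}
    (hc : c < 1) (B : ℝ) : ∀ᶠ t in atTop, c * H (B + t) ≤ H t := by
  obtain ⟨hmono, hpos, hsub, -⟩ := hH
  rcases le_or_gt c 0 with hc0 | hc0
  · exact Eventually.of_forall fun t =>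
      (mul_nonpos_of_nonpos_of_nonneg hc0 (hpos _).le).trans (hpos t).le
  · set A := max B 1
    have hA : 0 < A := one_pos.trans_le (le_max_right B 1)
    obtain ⟨t₀, ht₀⟩ := hsub (-Real.log c / A) (div_pos (neg_pos.2 (Real.log_neg hc0 hc)) hA)
    filter_upwards [eventually_gt_atTop t₀] with t ht
    have hexp : Real.exp (A * (-Real.log c / A)) = c⁻¹ := by
      rw [mul_div_cancel₀ _ hA.ne', Real.exp_neg, Real.exp_log hc0]
    calc c * H (B + t) ≤ c * H (A + t) := by gcongr; exact hmono (by gcongr; exact le_max_left B 1)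
      _ ≤ c * (c⁻¹ * H t) := by gcongr; exact hexp ▸ ht₀ t ht A hA
      _ = H t := mul_inv_cancel_left₀ hc0.ne' _

lemma IsPattersonFunction.eventually_psWeight_le_sum (hH : IsPattersonFunction S H)
    (hS : IsSymmGen S) {Y : Finset G} {w : G} {b : ℝ}
    (hY : ∀ᶠ g in cofinite, ∃ y ∈ Y, (wdist S y g : ℝ) ≤ wdist S w g + b)
    {c : ℝ≥0} (hc : c < 1) :
    ∀ᶠ g in cofinite, ∀ s : ℝ, 0 ≤ s →
      c * ENNReal.ofReal (Real.exp (-(s * b))) * psWeight S H s w g ≤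
        ∑ y ∈ Y, psWeight S H s y g := by
  have hslow : ∀ᶠ g in cofinite, ∀ y ∈ Y, c * H (wdist S w g) ≤ H (wdist S y g) :=
    Y.eventually_all.2 fun y _ => ((hS.tendsto_wdist_cofinite_atTop y).eventually
      (hH.eventually_mul_apply_add_le hc (wdist S w y))).mono fun g hg =>
        (mul_le_mul_of_nonneg_left (hH.1 (mod_cast hS.wdist_triangle w y g)) c.2).trans hg
  filter_upwards [hY, hslow] with g ⟨y, hy, hyb⟩ hg s hs
  exact (psWeight_le_psWeight hs (hH.2.1 _).le (hg y hy) hyb).trans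
    (Finset.single_le_sum (f := fun y => psWeight S H s y g) (fun _ _ => zero_le) hy)

variable {Z : Type*} [MeasurableSpace Z] {ι : G → Z}

lemma psApprox_apply_univ (H : ℝ → ℝ) (s : ℝ) (v : G) :
    psApprox S ι H s v univ = (∑' g, psWeight S H s 1 g)⁻¹ * ∑' g, psWeight S H s 1 g := by
  simp [psApprox, ← tsum_psWeight H s v]

lemma IsPattersonFunction.isProbabilityMeasure_psApprox (hH : IsPattersonFunction S H) {s : ℝ}
    (hs : growthRate S < s) (v : G) : IsProbabilityMeasure (psApprox S ι H s v) := by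
  have hpos : 0 < psWeight S H s 1 1 :=
    ENNReal.ofReal_pos.2 (mul_pos (hH.2.1 _) (Real.exp_pos _))
  refine ⟨(psApprox_apply_univ H s v).trans (ENNReal.inv_mul_cancel ?_ ?_)⟩
  · exact (hpos.trans_le (ENNReal.le_tsum 1)).ne'
  · exact (hH.2.2.2.2 s hs).tsum_ofReal_ne_top

lemma map_smul_psApprox [MulAction G Z] [MeasurableConstSMul G Z]
    (hequiv : ∀ g h : G, g • ι h = ι (g * h)) (H : ℝ → ℝ) (s : ℝ) (g v : G) :
    (psApprox S ι H s v).map (g • ·) = psApprox S ι H s (g * v) := by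
  ext A hA
  have hA' := measurable_const_smul g hA
  rw [Measure.map_apply (measurable_const_smul g) hA]
  simp only [psApprox, Measure.smul_apply, Measure.sum_apply _ hA, Measure.sum_apply _ hA',
    Measure.dirac_apply' _ hA, Measure.dirac_apply' _ hA', smul_eq_mul]
  congr 1
  rw [← (Equiv.mulLeft g).tsum_eq fun h => psWeight S H s (g * v) h * A.indicator 1 (ι h)]
  simp only [Equiv.coe_mulLeft, psWeight_mul_left, ← hequiv]
  rfl

lemma mul_lintegral_psApprox_le_sum [MeasurableSingletonClass Z] {s : ℝ} {a : ℝ≥0∞} {Y : Finset G}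
    {w : G} {f : Z → ℝ≥0∞}
    (h : ∀ g, f (ι g) ≠ 0 → a * psWeight S H s w g ≤ ∑ y ∈ Y, psWeight S H s y g) :
    a * ∫⁻ z, f z ∂psApprox S ι H s w ≤ ∑ y ∈ Y, ∫⁻ z, f z ∂psApprox S ι H s y := by
  have hint : ∀ v, ∫⁻ z, f z ∂psApprox S ι H s v =
      (∑' g, psWeight S H s 1 g)⁻¹ * ∑' g, psWeight S H s v g * f (ι g) := fun v => by
    simp [psApprox, lintegral_smul_measure, lintegral_sum_measure]
  simp only [hint]
  rw [← Finset.mul_sum, ← Summable.tsum_finsetSum fun _ _ => ENNReal.summable, mul_left_comm,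
    ← ENNReal.tsum_mul_left]
  gcongr with g
  rw [← Finset.sum_mul, ← mul_assoc]
  by_cases hg : f (ι g) = 0
  · simp only [hg, mul_zero, le_refl]
  · gcongr
    exact h g hg

end Patterson

namespace IsPSMeasures

variable {G : Type*} [Group G] {S : Set G} {Z : Type*} [MetricSpace Z] [MeasurableSpace Z]
  [BorelSpace Z] {ι : G → Z} {μ : G → Measure Z}

lemma exists_tendsto_lintegral (hμ : IsPSMeasures S ι μ) :
    ∃ (H : ℝ → ℝ) (sq : ℕ → ℝ), IsPattersonFunction S H ∧ (∀ n, growthRate S < sq n) ∧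
      Tendsto sq atTop (𝓝 (growthRate S)) ∧
      ∀ (v : G) (f : BoundedContinuousFunction Z ℝ≥0),
        Tendsto (fun n => ∫⁻ z, f z ∂psApprox S ι H (sq n) v) atTop (𝓝 (∫⁻ z, f z ∂μ v)) := by
  obtain ⟨hfin, H, sq, hH, hsq, hsqlim, hlim⟩ := hμ
  refine ⟨H, sq, hH, hsq, hsqlim, fun v => ?_⟩
  have := fun n => hH.isProbabilityMeasure_psApprox (ι := ι) (hsq n) v
  let ν : ℕ → FiniteMeasure Z := fun n => ⟨psApprox S ι H (sq n) v, inferInstance⟩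
  have hν : Tendsto ν atTop (𝓝 ⟨μ v, hfin v⟩) :=
    FiniteMeasure.tendsto_iff_forall_integral_tendsto.2 fun f => hlim v f.toContinuousMap
  exact FiniteMeasure.tendsto_iff_forall_lintegral_tendsto.1 hν

lemma map_smul [MulAction G Z] [ContinuousConstSMul G Z] (hμ : IsPSMeasures S ι μ)
    (hequiv : ∀ g h : G, g • ι h = ι (g * h)) (g v : G) : (μ v).map (g • ·) = μ (g * v) := by
  have := hμ.1
  obtain ⟨H, sq, -, -, -, hlim⟩ := hμ.exists_tendsto_lintegral
  refine ext_of_forall_lintegral_eq_of_IsFiniteMeasure fun f => ?_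
  rw [lintegral_map (by fun_prop) (measurable_const_smul g)]
  refine tendsto_nhds_unique
    (hlim v (f.compContinuous ⟨(g • ·), continuous_const_smul g⟩)) ?_
  refine (hlim (g * v) f).congr fun n => ?_
  rw [← map_smul_psApprox hequiv, lintegral_map (by fun_prop) (measurable_const_smul g)]
  rfl

lemma apply_eq_preimage [MulAction G Z] [ContinuousConstSMul G Z] (hμ : IsPSMeasures S ι μ)
    (hequiv : ∀ g h : G, g • ι h = ι (g * h)) (g : G) {A : Set Z} (hA : MeasurableSet A) :
    μ g A = μ 1 ((g • ·) ⁻¹' A) := by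
  rw [← Measure.map_apply (measurable_const_smul g) hA, hμ.map_smul hequiv, mul_one]

-- A limit measure does not see finitely many orbit points near the boundary, so the weights need
-- to be compared only for almost all `g`, where the slow growth of `H` costs a factor `c < 1`.
lemma exp_mul_measure_le_sum (hμ : IsPSMeasures S ι μ) (hS : IsSymmGen S) {Y : Finset G} {w : G}
    {b : ℝ} (hY : ∀ᶠ g in cofinite, ∃ y ∈ Y, (wdist S y g : ℝ) ≤ wdist S w g + b)
    {F : Set Z} (hF : IsClosed F) (hFb : F ⊆ bdryZ ι) :
    ENNReal.ofReal (Real.exp (-(growthRate S * b))) * μ w F ≤ ∑ y ∈ Y, μ y F := by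
  have := hμ.1
  obtain ⟨H, sq, hH, hsq, hsqlim, hlim⟩ := hμ.exists_tendsto_lintegral
  refine ENNReal.le_of_forall_lt_one_mul_le fun c hc => ?_
  lift c to ℝ≥0 using hc.ne_top
  have hweight := hH.eventually_psWeight_le_sum hS hY (ENNReal.coe_lt_one_iff.1 hc)
  set E : Set G := {g | ¬ ∀ s : ℝ, 0 ≤ s →
    c * ENNReal.ofReal (Real.exp (-(s * b))) * psWeight S H s w g ≤ ∑ y ∈ Y, psWeight S H s y g}
  have hE : IsOpen (ι '' E)ᶜ := ((eventually_cofinite.1 hweight).image ι).isClosed.isOpen_compl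
  rw [← mul_assoc, ← Measure.finsetSum_apply]
  refine mul_measure_le_of_forall_mul_lintegral_le hE (fun f hf => ?_) hF
    (hFb.trans (compl_subset_compl.2 (image_subset_range ι E)))
  have hexp : Tendsto (fun n => c * ENNReal.ofReal (Real.exp (-(sq n * b)))) atTop
      (𝓝 (c * ENNReal.ofReal (Real.exp (-(growthRate S * b))))) :=
    ENNReal.Tendsto.const_mul (ENNReal.tendsto_ofReal
      ((Real.continuous_exp.tendsto _).comp (hsqlim.mul_const b).neg)) (Or.inr ENNReal.coe_ne_top)
  rw [lintegral_finsetSum_measure]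
  refine le_of_tendsto_of_tendsto'
    (ENNReal.Tendsto.mul hexp (Or.inr ?_) (hlim w f) (Or.inr ?_))
    (tendsto_finsetSum Y fun y _ => hlim y f) fun n => mul_lintegral_psApprox_le_sum fun g hg => ?_
  · exact (f.lintegral_lt_top_of_nnreal (μ w)).ne
  · exact ENNReal.mul_ne_top ENNReal.coe_ne_top ENNReal.ofReal_ne_top
  · by_contra hgE
    have hgE' : g ∈ E := fun hall => hgE (hall _ ((growthRate_nonneg S).trans (hsq n).le))
    exact hg (ENNReal.coe_eq_zero.2 (hf (ι g) fun h => h ⟨g, hgE', rfl⟩))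

lemma exp_mul_measure_le (hμ : IsPSMeasures S ι μ) (hS : IsSymmGen S) (v w : G) {F : Set Z}
    (hF : IsClosed F) (hFb : F ⊆ bdryZ ι) :
    ENNReal.ofReal (Real.exp (-(growthRate S * wdist S v w))) * μ w F ≤ μ v F := by
  refine (hμ.exp_mul_measure_le_sum hS (Y := {v}) (Eventually.of_forall fun g => ?_) hF hFb).trans
    (Finset.sum_singleton _ _).le
  exact ⟨v, Finset.mem_singleton_self v, by
    rw [add_comm]; exact mod_cast hS.wdist_triangle v w g⟩

lemma measure_eq_zero (hμ : IsPSMeasures S ι μ) (hS : IsSymmGen S) {v : G} (w : G) {F : Set Z}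
    (hF : IsClosed F) (hFb : F ⊆ bdryZ ι) (hv : μ v F = 0) : μ w F = 0 := by
  have h := hμ.exp_mul_measure_le hS v w hF hFb
  rw [hv, nonpos_iff_eq_zero, mul_eq_zero] at h
  exact h.resolve_left (ENNReal.ofReal_pos.2 (Real.exp_pos _)).ne'

-- A geodesic from `1` to `g` crosses the sphere of radius `n` at a point `y` which is closer to `g`
-- by exactly `n`.
lemma exp_mul_measure_le_sum_sphere (hμ : IsPSMeasures S ι μ) (hS : IsSymmGen S) (n : ℕ)
    {F : Set Z} (hF : IsClosed F) (hFb : F ⊆ bdryZ ι) :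
    ENNReal.ofReal (Real.exp (growthRate S * n)) * μ 1 F ≤
      ∑ g ∈ (hS.finite_sphere n).toFinset, μ g F := by
  rw [← neg_neg (growthRate S * n), ← mul_neg]
  refine hμ.exp_mul_measure_le_sum hS ?_ hF hFb
  refine eventually_cofinite.2 ((hS.finite_setOf_wlen_le n).subset fun g hg => ?_)
  by_contra hgn
  obtain ⟨y, hy, hyg⟩ := hS.exists_wlen_eq_and_add_wdist_eq (not_le.1 hgn).le
  refine hg ⟨y, (hS.finite_sphere n).mem_toFinset.2 hy, ?_⟩
  rw [wdist_one_left, ← hyg, Nat.cast_add, add_neg_cancel_comm]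

lemma measure_mul_measure_le_sum_sphere (hμ : IsPSMeasures S ι μ) (hS : IsSymmGen S) (n : ℕ)
    {K F : Set Z} (hK : IsClosed K) (hKb : K ⊆ bdryZ ι) (hF : IsClosed F) (hFb : F ⊆ bdryZ ι) :
    μ 1 K * μ 1 F ≤ ∑ g ∈ (hS.finite_sphere n).toFinset, μ g K * μ g F := by
  have hKg : ∀ g ∈ (hS.finite_sphere n).toFinset,
      ENNReal.ofReal (Real.exp (-(growthRate S * n))) * μ 1 K ≤ μ g K := fun g hg => by
    have hgn : wlen S g = n := (hS.finite_sphere n).mem_toFinset.1 hg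
    simpa only [hS.wdist_one_right, hgn] using hμ.exp_mul_measure_le hS g 1 hK hKb
  calc μ 1 K * μ 1 F
      = ENNReal.ofReal (Real.exp (-(growthRate S * n))) * μ 1 K *
          (ENNReal.ofReal (Real.exp (growthRate S * n)) * μ 1 F) := by
        rw [mul_mul_mul_comm, ← ENNReal.ofReal_mul (Real.exp_pos _).le, ← Real.exp_add,
          neg_add_cancel, Real.exp_zero, ENNReal.ofReal_one, one_mul]
    _ ≤ ENNReal.ofReal (Real.exp (-(growthRate S * n))) * μ 1 K *
          ∑ g ∈ (hS.finite_sphere n).toFinset, μ g F := by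
        gcongr
        exact hμ.exp_mul_measure_le_sum_sphere hS n hF hFb
    _ ≤ ∑ g ∈ (hS.finite_sphere n).toFinset, μ g K * μ g F := by
        rw [Finset.mul_sum]
        gcongr with g hg
        exact hKg g hg

lemma tsum_measure_mul_measure_eq_top (hμ : IsPSMeasures S ι μ) (hS : IsSymmGen S)
    {K F : Set Z} (hK : IsClosed K) (hKb : K ⊆ bdryZ ι) (hF : IsClosed F) (hFb : F ⊆ bdryZ ι)
    (hK0 : μ 1 K ≠ 0) (hF0 : μ 1 F ≠ 0) : ∑' g, μ g K * μ g F = ⊤ := by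
  refine top_unique ?_
  calc (⊤ : ℝ≥0∞) = ∑' _ : ℕ, μ 1 K * μ 1 F :=
        (ENNReal.tsum_const_eq_top_of_ne_zero (mul_ne_zero hK0 hF0)).symm
    _ ≤ ∑' (n : ℕ) (g : wlen S ⁻¹' {n}), μ g K * μ g F := by
        refine ENNReal.tsum_le_tsum fun n => ?_
        refine (hμ.measure_mul_measure_le_sum_sphere hS n hK hKb hF hFb).trans_eq ?_
        rw [← Finset.tsum_subtype' _ fun g => μ g K * μ g F, Finite.coe_toFinset]
    _ = ∑' g, μ g K * μ g F := ENNReal.tsum_fiberwise (fun g => μ g K * μ g F) (wlen S)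

variable [MulAction G Z] [ContinuousConstSMul G Z] {q : Z}

lemma measure_ne_zero_of_smul_mem (hμ : IsPSMeasures S ι μ) (hS : IsSymmGen S)
    (hequiv : ∀ g h : G, g • ι h = ι (g * h)) (hqb : q ∈ bdryZ ι) {v : G} (hv : μ v {q} ≠ 0)
    {g : G} {K : Set Z} (hg : g • q ∈ K) : μ 1 K ≠ 0 := fun hK0 => by
  have hsub : (g⁻¹ • ·) ⁻¹' {q} ⊆ K := fun z hz => inv_smul_eq_iff.1 hz ▸ hg
  have hzero : μ g⁻¹ {q} = 0 := by
    rw [hμ.apply_eq_preimage hequiv g⁻¹ (measurableSet_singleton q)]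
    exact measure_mono_null hsub hK0
  exact hv (hμ.measure_eq_zero hS v isClosed_singleton (singleton_subset_iff.2 hqb) hzero)

lemma tsum_measure_mul_measure_singleton_ne_top (hμ : IsPSMeasures S ι μ)
    (hequiv : ∀ g h : G, g • ι h = ι (g * h)) (hq : IsBddParabolicPt G ι q) {K : Set Z}
    (hK : IsCompact K) (hKsub : K ⊆ bdryZ ι \ {q}) : ∑' g, μ g K * μ g {q} ≠ ⊤ := by
  have := hμ.1 1
  simp only [hμ.apply_eq_preimage hequiv _ hK.measurableSet,
    hμ.apply_eq_preimage hequiv _ (measurableSet_singleton q)]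
  refine ne_top_of_le_ne_top ?_ (tsum_measure_preimage_smul_mul_le (μ 1) hK.measurableSet q)
  have hfin := hq.2.2.2 K hK hKsub
  exact ENNReal.mul_ne_top (by simpa using hfin)
    (ENNReal.mul_ne_top (measure_ne_top _ _) (measure_ne_top _ _))

end IsPSMeasures

theorem ps_measures_no_atoms_at_parabolic_points_general {G : Type*} [Group G] {Z : Type*}
    [MetricSpace Z] [MeasurableSpace Z] [BorelSpace Z] [MulAction G Z] [ContinuousConstSMul G Z]
    {S : Set G} (hS : IsSymmGen S) {ι : G → Z} (hequiv : ∀ g h : G, g • ι h = ι (g * h))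
    {μ : G → Measure Z} (hμ : IsPSMeasures S ι μ) {q : Z} (hq : IsBddParabolicPt G ι q)
    (hmove : ∃ g : G, g • q ≠ q) (v : G) : μ v {q} = 0 := by
  have hqb : {q} ⊆ bdryZ ι := singleton_subset_iff.2 hq.1
  by_contra hv
  obtain ⟨K, hK, hKsub, hKcov⟩ := hq.2.2.1
  obtain ⟨h, hh⟩ := hmove
  obtain ⟨p, -, hpK⟩ := hKcov (h • q) ⟨smul_mem_bdryZ hequiv h hq.1, hh⟩
  rw [smul_smul] at hpK
  refine hμ.tsum_measure_mul_measure_singleton_ne_top hequiv hq hK hKsub ?_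
  refine hμ.tsum_measure_mul_measure_eq_top hS hK.isClosed (hKsub.trans sdiff_subset)
    isClosed_singleton hqb (hμ.measure_ne_zero_of_smul_mem hS hequiv hq.1 hv hpK) ?_
  exact fun h1 => hv (hμ.measure_eq_zero hS v isClosed_singleton hqb h1)

/-- Patterson–Sullivan measures on the Bowditch boundary have no atoms at bounded parabolic
points. -/
theorem ps_measures_no_atoms_at_parabolic_points
    {G : Type*} [Group G] [Countable G] {Z : Type*} [MetricSpace Z] [CompactSpace Z]
    [MeasurableSpace Z] [BorelSpace Z] [MulAction G Z]
    (S : Set G) (hS : IsSymmGen S) (hne : ¬ IsElementaryGroup G)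
    (Ps : Set (Subgroup G)) (hPs : Ps.Finite) (hrh : IsRelHypWrt G Ps)
    (ι : G → Z) (hbc : IsGeomFinBoundary G S ι)
    (μ : G → MeasureTheory.Measure Z) (hPS : IsPSMeasures S ι μ) :
    ∀ q : Z, IsBddParabolicPt G ι q → ∀ v : G, μ v {q} = 0 := by
  obtain ⟨-, hequiv, hcont, -, hnt, -, -, hgf⟩ := hbc
  have : ContinuousConstSMul G Z := ⟨hcont⟩
  exact fun q hq => ps_measures_no_atoms_at_parabolic_points_general hS hequiv hPS hq
    (hq.exists_smul_ne hequiv hnt hgf)
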